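/- Let Ω ⊆ ℝ^{d+1} be an L₀-Lipschitz graph domain. There exist constants δ₀ > 0 and L₁ > 0, depending only on L₀ and d, such that for every 0 < δ < δ₀ the following holds: if φ is a C¹ map defined on a neighborhood of the closure of Ω which is (1+δ)-bi-Lipschitz from the closure of Ω onto its image (i.e. (1+δ)^{-1}|z−z'| ≤ |φ(z)−φ(z')| ≤ (1+δ)|z−z'|) and satisfies ‖Dφ(z) − I‖ ≤ δ for all z in the closure of Ω, then φ(Ω) is an L₁-Lipschitz graph domain. -/

import Mathlib

open Metric MeasureTheory Set
open scoped ENNReal NNReal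

noncomputable section

/-- `Ω ⊆ ℝ^{d+1}` is an `M`-Lipschitz graph domain: an open connected set such that, after
applying a composition `x ↦ c • R x + b` of a translation, dilation and rotation, its boundary
is the radial graph of an `M`-Lipschitz function `r : S^d → [1/(1+M), 1]`. -/
def IsLipschitzGraphDomain (d : ℕ) (M : ℝ) (Ω : Set (EuclideanSpace ℝ (Fin (d + 1)))) : Prop :=
  IsOpen Ω ∧ IsConnected Ω ∧
  ∃ (c : ℝ) (R : EuclideanSpace ℝ (Fin (d + 1)) ≃ₗᵢ[ℝ] EuclideanSpace ℝ (Fin (d + 1)))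
    (b : EuclideanSpace ℝ (Fin (d + 1))) (rf : EuclideanSpace ℝ (Fin (d + 1)) → ℝ),
    0 < c ∧
    frontier ((fun x => c • R x + b) '' Ω) =
      {y | ∃ θ ∈ Metric.sphere (0 : EuclideanSpace ℝ (Fin (d + 1))) 1, y = rf θ • θ} ∧
    (∀ θ ∈ Metric.sphere (0 : EuclideanSpace ℝ (Fin (d + 1))) 1,
      ∀ ψ ∈ Metric.sphere (0 : EuclideanSpace ℝ (Fin (d + 1))) 1,
        |rf θ - rf ψ| ≤ M * dist θ ψ) ∧
    (∀ θ ∈ Metric.sphere (0 : EuclideanSpace ℝ (Fin (d + 1))) 1,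
      1 / (1 + M) ≤ rf θ ∧ rf θ ≤ 1)

namespace LipGraph

variable {E : Type*} [NormedAddCommGroup E] [InnerProductSpace ℝ E]

lemma norm_unit {x : E} (hx : x ≠ 0) : ‖‖x‖⁻¹ • x‖ = 1 := by
  rw [norm_smul, norm_inv, norm_norm]
  exact inv_mul_cancel₀ (norm_ne_zero_iff.2 hx)

lemma unit_diff {x y : E} (hx : x ≠ 0) (hy : y ≠ 0) :
    ‖x‖ * ‖‖x‖⁻¹ • x - ‖y‖⁻¹ • y‖ ≤ 2 * ‖x - y‖ := by
  have hx' : ‖x‖ ≠ 0 := norm_ne_zero_iff.2 hx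
  have hy' : ‖y‖ ≠ 0 := norm_ne_zero_iff.2 hy
  have e : ‖x‖ • (‖x‖⁻¹ • x - ‖y‖⁻¹ • y) = (x - y) + (‖y‖ - ‖x‖) • (‖y‖⁻¹ • y) := by
    rw [smul_sub, smul_smul, mul_inv_cancel₀ hx', sub_smul, smul_smul ‖y‖, mul_inv_cancel₀ hy']
    module
  have e2 : ‖x‖ * ‖‖x‖⁻¹ • x - ‖y‖⁻¹ • y‖ = ‖‖x‖ • (‖x‖⁻¹ • x - ‖y‖⁻¹ • y)‖ := by
    rw [norm_smul, norm_norm]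
  rw [e2, e]
  refine (norm_add_le _ _).trans ?_
  rw [norm_smul, norm_unit hy, mul_one, Real.norm_eq_abs]
  have := abs_norm_sub_norm_le y x
  rw [norm_sub_rev] at this
  linarith

/-- Integration along a Lipschitz path. -/
lemma path_bound {f : E → E} {f' : E → E →L[ℝ] E} {γ : ℝ → E} {δ l : ℝ} (hδ : 0 < δ) (hl : 0 ≤ l)
    (hγ : ∀ s ∈ Icc (0:ℝ) 1, ∀ t ∈ Icc (0:ℝ) 1, ‖γ s - γ t‖ ≤ l * |s - t|)
    (hf : ∀ t ∈ Icc (0:ℝ) 1, HasFDerivAt f (f' (γ t)) (γ t))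
    (hb : ∀ t ∈ Icc (0:ℝ) 1, ‖f' (γ t)‖ ≤ δ) :
    ‖f (γ 1) - f (γ 0)‖ ≤ δ * l := by
  have hγc : ContinuousOn γ (Icc 0 1) := by
    have : LipschitzOnWith ⟨l, hl⟩ γ (Icc 0 1) := by
      apply LipschitzOnWith.of_dist_le_mul
      intro s hs t ht
      rw [dist_eq_norm, Real.dist_eq]
      exact hγ s hs t ht
    exact this.continuousOn
  have hcont : ContinuousOn (fun t => f (γ t) - f (γ 0)) (Icc 0 1) := by
    refine ContinuousOn.sub ?_ continuousOn_const
    intro t ht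
    exact (hf t ht).continuousAt.comp_continuousWithinAt (hγc t ht)
  have key : ∀ C : ℝ, δ * l < C → ‖f (γ 1) - f (γ 0)‖ ≤ C := by
    intro C hC
    obtain ⟨C', hC1, hC2⟩ := exists_between hC
    have := image_norm_le_of_liminf_right_slope_norm_lt_deriv_boundary (a := 0) (b := 1)
      (f := fun t => f (γ t) - f (γ 0)) (f' := fun _ => C') hcont
      (B := fun t => C * t) (B' := fun _ => C) ?_ (by simp) (by fun_prop)
      (fun x _ => by simpa using ((hasDerivAt_id x).const_mul C).hasDerivWithinAt)
      (fun _ _ _ => hC2) (x := 1) (by simp)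
    · simpa using this
    intro t ht r hr
    apply Filter.Eventually.frequently
    have ht' : t ∈ Icc (0:ℝ) 1 := ⟨ht.1, ht.2.le⟩
    have hl1 : 0 < l + 1 := by linarith
    have hη : 0 < (r - δ * l) / (l + 1) := by
      apply div_pos _ hl1
      linarith
    have h1 := (hasFDerivAt_iff_isLittleO.1 (hf t ht')).def hη
    have hsub : Icc (0:ℝ) 1 ∈ nhdsWithin t (Ioi t) := by
      refine Filter.mem_of_superset (Ioo_mem_nhdsGT ht.2) ?_
      intro z hz
      exact ⟨ht.1.trans hz.1.le, hz.2.le⟩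
    have htend : Filter.Tendsto γ (nhdsWithin t (Ioi t)) (nhds (γ t)) :=
      (hγc t ht').mono_left (le_inf nhdsWithin_le_nhds (Filter.le_principal_iff.2 hsub))
    filter_upwards [htend.eventually h1, hsub, self_mem_nhdsWithin] with z hz hz01 hzt
    have hzt' : 0 < z - t := sub_pos.2 hzt
    rw [slope_def_field, div_lt_iff₀ hzt']
    have h2 : ‖γ z - γ t‖ ≤ l * (z - t) := by
      have := hγ z hz01 t ht'
      rwa [abs_of_pos hzt'] at this
    have h3 : ‖f (γ z) - f (γ t)‖ ≤ (δ + (r - δ * l) / (l + 1)) * ‖γ z - γ t‖ := by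
      have e : f (γ z) - f (γ t) = (f (γ z) - f (γ t) - f' (γ t) (γ z - γ t))
        + f' (γ t) (γ z - γ t) := by abel
      rw [e]
      refine (norm_add_le _ _).trans ?_
      have := (f' (γ t)).le_of_opNorm_le (hb t ht') (γ z - γ t)
      linarith
    have h4 : (δ + (r - δ * l) / (l + 1)) * ‖γ z - γ t‖ ≤
        (δ + (r - δ * l) / (l + 1)) * (l * (z - t)) := by gcongr
    have h5 : (δ + (r - δ * l) / (l + 1)) * l < r := by
      have : (r - δ * l) / (l + 1) * (l + 1) = r - δ * l := div_mul_cancel₀ _ hl1.ne'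
      nlinarith
    have h6 : ‖f (γ z) - f (γ 0)‖ - ‖f (γ t) - f (γ 0)‖ ≤ ‖f (γ z) - f (γ t)‖ := by
      have := norm_sub_norm_le (f (γ z) - f (γ 0)) (f (γ t) - f (γ 0))
      simpa using this
    simp only [Function.comp]
    have h7 := mul_lt_mul_of_pos_right h5 hzt'
    nlinarith
  exact le_of_forall_gt_imp_ge_of_dense key

lemma graph_core [CompleteSpace E] {L ε : ℝ} (hL : 0 ≤ L) (hε : 0 ≤ ε)
    (hε2 : 3 * ε * (1 + L) ^ 3 ≤ 1 / 6)
    {r : E → ℝ} {h : E → E}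
    (hr : ∀ a ∈ sphere (0 : E) 1, ∀ b ∈ sphere (0 : E) 1, |r a - r b| ≤ L * dist a b)
    (hrb : ∀ a ∈ sphere (0 : E) 1, 1 / (1 + L) ≤ r a ∧ r a ≤ 1)
    (hh : ∀ a ∈ sphere (0 : E) 1, ∀ b ∈ sphere (0 : E) 1, ‖h a - h b‖ ≤ ε * ‖a - b‖)
    (hhb : ∀ a ∈ sphere (0 : E) 1, ‖h a‖ ≤ 2 * ε) :
    ∃ r' : E → ℝ,
      {y | ∃ a ∈ sphere (0 : E) 1, y = (1 / 2 : ℝ) • (r a • a + h a)} =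
        {y | ∃ a ∈ sphere (0 : E) 1, y = r' a • a} ∧
      (∀ a ∈ sphere (0 : E) 1, ∀ b ∈ sphere (0 : E) 1,
        |r' a - r' b| ≤ (5 * (1 + L)) * dist a b) ∧
      (∀ a ∈ sphere (0 : E) 1, 1 / (1 + 5 * (1 + L)) ≤ r' a ∧ r' a ≤ 1) := by
  have hm : 0 < 1 + L := by linarith
  simp only [mem_sphere_zero_iff_norm, dist_eq_norm] at *
  have hrpos : ∀ a : E, ‖a‖ = 1 → 0 < r a := fun a ha =>
    lt_of_lt_of_le (by positivity) (hrb a ha).1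
  have hrinv : ∀ a : E, ‖a‖ = 1 → (r a)⁻¹ ≤ 1 + L := fun a ha => by
    have := (hrb a ha).1
    rw [inv_le_comm₀ (hrpos a ha) hm]; simpa using this
  set k : E → E := fun a => (r a)⁻¹ • h a with hk
  have hm1 : 1 ≤ 1 + L := by linarith
  have hkb : ∀ a : E, ‖a‖ = 1 → ‖k a‖ ≤ 1 / 6 := by
    intro a ha
    rw [hk]; simp only
    rw [norm_smul, Real.norm_of_nonneg (inv_nonneg.2 (hrpos a ha).le)]
    calc (r a)⁻¹ * ‖h a‖ ≤ (1 + L) * (2 * ε) := by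
          gcongr
          · exact hrinv a ha
          · exact hhb a ha
      _ ≤ 3 * ε * (1 + L) ^ 3 := by
          have : (1 + L) ≤ (1 + L) ^ 3 := le_self_pow₀ hm1 (by norm_num)
          nlinarith [mul_le_mul_of_nonneg_left this hε, mul_nonneg hε hm.le]
      _ ≤ 1 / 6 := hε2
  have hkl : ∀ a : E, ‖a‖ = 1 → ∀ b : E, ‖b‖ = 1 → ‖k a - k b‖ ≤ 1 / 6 * ‖a - b‖ := by
    intro a ha b hb
    have e : k a - k b = (r a)⁻¹ • (h a - h b) + ((r b - r a) * ((r a)⁻¹ * (r b)⁻¹)) • h b := by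
      have h1 := (hrpos a ha).ne'
      have h2 := (hrpos b hb).ne'
      have : (r b - r a) * ((r a)⁻¹ * (r b)⁻¹) = (r a)⁻¹ - (r b)⁻¹ := by field_simp
      rw [this]; simp only [hk]; module
    have i1 : 0 ≤ (r a)⁻¹ := inv_nonneg.2 (hrpos a ha).le
    have i2 : 0 ≤ (r b)⁻¹ := inv_nonneg.2 (hrpos b hb).le
    rw [e]
    refine (norm_add_le _ _).trans ?_
    rw [norm_smul, norm_smul, norm_mul, norm_mul, Real.norm_of_nonneg i1, Real.norm_of_nonneg i2,
      Real.norm_eq_abs, abs_sub_comm]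
    calc (r a)⁻¹ * ‖h a - h b‖ + |r a - r b| * ((r a)⁻¹ * (r b)⁻¹) * ‖h b‖
        ≤ (1 + L) * (ε * ‖a - b‖) + (L * ‖a - b‖) * ((1 + L) * (1 + L)) * (2 * ε) := by
          gcongr
          · exact hrinv a ha
          · exact hh a ha b hb
          · exact hr a ha b hb
          · exact hrinv a ha
          · exact hrinv b hb
          · exact hhb b hb
      _ = (ε * ((1 + L) + 2 * L * (1 + L) ^ 2)) * ‖a - b‖ := by ring
      _ ≤ (3 * ε * (1 + L) ^ 3) * ‖a - b‖ := by
          have : (1 + L) + 2 * L * (1 + L) ^ 2 ≤ 3 * (1 + L) ^ 3 := by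
            nlinarith [pow_nonneg hL 2, pow_nonneg hL 3]
          refine mul_le_mul_of_nonneg_right ?_ (norm_nonneg _)
          nlinarith [mul_le_mul_of_nonneg_left this hε]
      _ ≤ 1 / 6 * ‖a - b‖ := by gcongr
  set K : E → E := fun x => ‖x‖ • k (‖x‖⁻¹ • x) with hK
  have hK0 : K 0 = 0 := by simp [hK]
  have hKn : ∀ x, ‖K x‖ ≤ 1 / 2 * ‖x‖ := by
    intro x
    by_cases hx : x = 0
    · simp [hx, hK0]
    · have := hkb _ (norm_unit hx)
      simp only [hK]
      rw [norm_smul, norm_norm]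
      nlinarith [norm_nonneg x]
  have hKl : ∀ x y, ‖K x - K y‖ ≤ 1 / 2 * ‖x - y‖ := by
    intro x y
    by_cases hx : x = 0
    · subst hx; rw [hK0, zero_sub, zero_sub, norm_neg, norm_neg]; exact hKn y
    by_cases hy : y = 0
    · subst hy; rw [hK0, sub_zero, sub_zero]; exact hKn x
    have e : K x - K y = ‖x‖ • (k (‖x‖⁻¹ • x) - k (‖y‖⁻¹ • y)) +
        (‖x‖ - ‖y‖) • k (‖y‖⁻¹ • y) := by
      simp only [hK]; module
    rw [e]
    refine (norm_add_le _ _).trans ?_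
    rw [norm_smul, norm_smul, norm_norm, Real.norm_eq_abs]
    have h1 := hkl _ (norm_unit hx) _ (norm_unit hy)
    have h2 := unit_diff hx hy
    have h3 := hkb _ (norm_unit hy)
    have h4 := abs_norm_sub_norm_le x y
    have h5 := mul_le_mul_of_nonneg_left h1 (norm_nonneg x)
    have h6 := mul_le_mul h4 h3 (norm_nonneg _) (norm_nonneg _)
    linarith
  have hsurj : ∀ y, ∃ x, x + K x = y := by
    intro y
    have : ContractingWith (1/2 : ℝ≥0) (fun x => y - K x) := by
      refine ⟨by
        rw [← NNReal.coe_lt_coe]; norm_num, ?_⟩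
      apply LipschitzWith.of_dist_le_mul
      intro a b
      rw [dist_eq_norm, dist_eq_norm, sub_sub_sub_cancel_left, norm_sub_rev a b]
      simpa using hKl b a
    refine ⟨this.fixedPoint, ?_⟩
    have h := this.fixedPoint_isFixedPt
    have h' : y - K this.fixedPoint = this.fixedPoint := h
    nth_rewrite 1 [← h']
    abel
  choose G hG using hsurj
  have hexp : ∀ x y, ‖x - y‖ ≤ 2 * ‖(x + K x) - (y + K y)‖ := by
    intro x y
    have h1 := hKl x y
    have e : x - y = ((x + K x) - (y + K y)) - (K x - K y) := by abel
    have := norm_sub_le ((x + K x) - (y + K y)) (K x - K y)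
    rw [← e] at this
    linarith
  have hinj : ∀ x y, x + K x = y + K y → x = y := by
    intro x y hxy
    have := hexp x y
    rw [hxy, sub_self, norm_zero, mul_zero] at this
    exact sub_eq_zero.1 (norm_le_zero_iff.1 this)
  have hGl : ∀ a b, ‖G a - G b‖ ≤ 2 * ‖a - b‖ := by
    intro a b
    have := hexp (G a) (G b)
    rwa [hG, hG] at this
  have hGlow : ∀ a, ‖a‖ = 1 → 2 / 3 ≤ ‖G a‖ := by
    intro a ha
    have h1 := norm_add_le (G a) (K (G a))
    rw [hG, ha] at h1
    linarith [hKn (G a)]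
  have hGup : ∀ a, ‖a‖ = 1 → ‖G a‖ ≤ 2 := by
    intro a ha
    have h1 := norm_sub_le (G a + K (G a)) (K (G a))
    rw [add_sub_cancel_right, hG, ha] at h1
    linarith [hKn (G a)]
  have hGne : ∀ a, ‖a‖ = 1 → G a ≠ 0 := by
    intro a ha h0
    have := hGlow a ha
    rw [h0, norm_zero] at this
    linarith
  have hT : ∀ a, ‖a‖ = 1 → r a • a + h a = r a • (a + K a) := by
    intro a ha
    simp only [hK, hk, ha, inv_one, one_smul, smul_add, smul_smul]
    rw [one_mul, mul_inv_cancel₀ (hrpos a ha).ne', one_smul]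
  have hhom : ∀ (t : ℝ) (x : E), 0 < t → t • x + K (t • x) = t • (x + K x) := by
    intro t x ht
    have : (‖t • x‖⁻¹ • t • x) = ‖x‖⁻¹ • x := by
      rw [norm_smul, Real.norm_of_nonneg ht.le, smul_smul]
      congr 1
      rw [mul_inv, mul_right_comm, inv_mul_cancel₀ ht.ne', one_mul]
    simp only [hK, this]
    rw [norm_smul, Real.norm_of_nonneg ht.le, smul_add, mul_smul]
  refine ⟨fun a => 1 / 2 * (r (‖G a‖⁻¹ • G a) * ‖G a‖⁻¹), ?_, ?_, ?_⟩
  · ext y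
    simp only [mem_ofPred_eq]
    constructor
    · rintro ⟨a, ha, rfl⟩
      have ht : 0 < ‖a + K a‖ := by
        have h1 := norm_sub_le (a + K a) (K a)
        rw [add_sub_cancel_right, ha] at h1
        have := hKn a
        rw [ha] at this
        linarith
      set t := ‖a + K a‖ with htd
      have hne : a + K a ≠ 0 := norm_pos_iff.1 ht
      have hGa : G (t⁻¹ • (a + K a)) = t⁻¹ • a := by
        apply hinj
        rw [hG, hhom _ _ (inv_pos.2 ht)]
      have hGn : ‖t⁻¹ • a‖ = t⁻¹ := by
        rw [norm_smul, ha, mul_one, Real.norm_of_nonneg (inv_pos.2 ht).le]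
      refine ⟨t⁻¹ • (a + K a), norm_unit hne, ?_⟩
      rw [hGa, hGn, inv_inv, smul_smul t, mul_inv_cancel₀ ht.ne', one_smul, hT a ha, smul_smul,
        smul_smul]
      congr 1
      field_simp
    · rintro ⟨a, ha, rfl⟩
      refine ⟨‖G a‖⁻¹ • G a, norm_unit (hGne a ha), ?_⟩
      rw [hT _ (norm_unit (hGne a ha)), hhom _ _ (inv_pos.2 (norm_pos_iff.2 (hGne a ha))), hG,
        smul_smul, smul_smul, mul_assoc]
  · intro a ha b hb
    have ha1 := hGlow a ha
    have hb1 := hGlow b hb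
    have hpa : 0 < ‖G a‖ := by linarith
    have hpb : 0 < ‖G b‖ := by linarith
    set p := r (‖G a‖⁻¹ • G a) with hp
    set q := r (‖G b‖⁻¹ • G b) with hq
    have hua := norm_unit (hGne a ha)
    have hub := norm_unit (hGne b hb)
    have h1 : |p - q| ≤ L * ‖‖G a‖⁻¹ • G a - ‖G b‖⁻¹ • G b‖ := hr _ hua _ hub
    have h2 := unit_diff (hGne a ha) (hGne b hb)
    have h3 := hGl a b
    have hq1 : q ≤ 1 := (hrb _ hub).2
    have hq0 : 0 < q := hrpos _ hub
    have ia : ‖G a‖⁻¹ ≤ 3 / 2 := by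
      rw [inv_le_comm₀ hpa (by norm_num)]; linarith
    have ib : ‖G b‖⁻¹ ≤ 3 / 2 := by
      rw [inv_le_comm₀ hpb (by norm_num)]; linarith
    set u := ‖‖G a‖⁻¹ • G a - ‖G b‖⁻¹ • G b‖ with hu
    have hu0 : 0 ≤ u := norm_nonneg _
    have h4 : u ≤ 6 * ‖a - b‖ := by nlinarith
    have e : 1 / 2 * (p * ‖G a‖⁻¹) - 1 / 2 * (q * ‖G b‖⁻¹) =
        1 / 2 * ((p - q) * ‖G a‖⁻¹ + q * ((‖G b‖ - ‖G a‖) * (‖G a‖⁻¹ * ‖G b‖⁻¹))) := by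
      field_simp
      ring
    rw [e, abs_mul]
    have h5 : |‖G b‖ - ‖G a‖| ≤ 2 * ‖a - b‖ := by
      rw [abs_sub_comm]
      exact (abs_norm_sub_norm_le _ _).trans h3
    have h6 : |(p - q) * ‖G a‖⁻¹| ≤ (L * (6 * ‖a - b‖)) * (3 / 2) := by
      rw [abs_mul, abs_of_pos (inv_pos.2 hpa)]
      gcongr
      exact h1.trans (by gcongr)
    have h7 : |q * ((‖G b‖ - ‖G a‖) * (‖G a‖⁻¹ * ‖G b‖⁻¹))| ≤
        1 * ((2 * ‖a - b‖) * (3 / 2 * (3 / 2))) := by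
      rw [abs_mul, abs_mul, abs_mul, abs_of_pos (inv_pos.2 hpa), abs_of_pos (inv_pos.2 hpb),
        abs_of_pos hq0]
      gcongr
    have h8 := abs_add_le ((p - q) * ‖G a‖⁻¹) (q * ((‖G b‖ - ‖G a‖) * (‖G a‖⁻¹ * ‖G b‖⁻¹)))
    rw [abs_of_pos (by norm_num : (0:ℝ) < 1 / 2)]
    have h9 : 0 ≤ L * ‖a - b‖ := by positivity
    have h10 := norm_nonneg (a - b)
    nlinarith
  · intro a ha
    have ha1 := hGlow a ha
    have hpa : 0 < ‖G a‖ := by linarith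
    have hua := norm_unit (hGne a ha)
    obtain ⟨h1, h2⟩ := hrb _ hua
    have ia : ‖G a‖⁻¹ ≤ 3 / 2 := by
      rw [inv_le_comm₀ hpa (by norm_num)]; linarith
    have ib : 1 / 2 ≤ ‖G a‖⁻¹ := by
      rw [le_inv_comm₀ (by norm_num) hpa]; norm_num; exact hGup a ha
    have h0 := hrpos _ hua
    constructor
    · calc 1 / (1 + 5 * (1 + L)) ≤ 1 / (4 * (1 + L)) := by
            apply one_div_le_one_div_of_le (by positivity); linarith
        _ = 1 / 2 * ((1 / (1 + L)) * (1 / 2)) := by field_simp; norm_num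
        _ ≤ 1 / 2 * (r (‖G a‖⁻¹ • G a) * ‖G a‖⁻¹) := by gcongr
    · have := mul_le_mul h2 ia (inv_pos.2 hpa).le zero_le_one
      linarith

lemma arc_bound {f : E → E} {f' : E → E →L[ℝ] E} {X : E → E} {δ l : ℝ} (hδ : 0 < δ) (hl : 0 ≤ l)
    (hX : ∀ a b : E, ‖a‖ = 1 → ‖b‖ = 1 → ‖X a - X b‖ ≤ l * ‖a - b‖)
    (hf : ∀ a : E, ‖a‖ = 1 → HasFDerivAt f (f' (X a)) (X a))
    (hb : ∀ a : E, ‖a‖ = 1 → ‖f' (X a)‖ ≤ δ)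
    {a b : E} (ha : ‖a‖ = 1) (hb1 : ‖b‖ = 1) (hab : 0 ≤ inner ℝ a b) :
    ‖f (X b) - f (X a)‖ ≤ 4 * δ * l * ‖a - b‖ := by
  set p : ℝ → E := fun t => a + t • (b - a) with hp
  have hpn : ∀ t ∈ Icc (0:ℝ) 1, 1 / 2 ≤ ‖p t‖ := by
    intro t ht
    have e : p t = (1 - t) • a + t • b := by simp only [hp]; module
    have h1 : ‖p t‖ ^ 2 = (1 - t) ^ 2 + 2 * ((1 - t) * (t * inner ℝ a b)) + t ^ 2 := by
      rw [e, norm_add_sq_real, norm_smul, norm_smul, ha, hb1, real_inner_smul_left,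
        real_inner_smul_right, mul_one, mul_one, Real.norm_eq_abs, Real.norm_eq_abs, sq_abs, sq_abs]
    have h2 : 0 ≤ (1 - t) * (t * inner ℝ a b) :=
      mul_nonneg (by linarith [ht.2]) (mul_nonneg ht.1 hab)
    nlinarith [norm_nonneg (p t), sq_nonneg (1 - 2 * t)]
  have hp0 : ∀ t ∈ Icc (0:ℝ) 1, p t ≠ 0 := by
    intro t ht h0
    have := hpn t ht
    rw [h0, norm_zero] at this
    linarith
  have := path_bound (f := f) (f' := f') (γ := fun t => X (‖p t‖⁻¹ • p t)) (δ := δ)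
    (l := 4 * l * ‖a - b‖) hδ (by positivity) ?_
    (fun t ht => hf _ (norm_unit (hp0 t ht))) (fun t ht => hb _ (norm_unit (hp0 t ht)))
  · have e0 : p 0 = a := by simp [hp]
    have e1 : p 1 = b := by simp [hp]
    simp only [e0, e1, ha, hb1, inv_one, one_smul] at this
    linarith
  intro s hs t ht
  refine (hX _ _ (norm_unit (hp0 s hs)) (norm_unit (hp0 t ht))).trans ?_
  have h1 := unit_diff (hp0 s hs) (hp0 t ht)
  have h2 : ‖p s - p t‖ = |s - t| * ‖a - b‖ := by
    have : p s - p t = (s - t) • (b - a) := by simp only [hp]; module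
    rw [this, norm_smul, Real.norm_eq_abs, norm_sub_rev b a]
  have h3 := mul_le_mul_of_nonneg_right (hpn s hs)
    (norm_nonneg (‖p s‖⁻¹ • p s - ‖p t‖⁻¹ • p t))
  have h4 : ‖‖p s‖⁻¹ • p s - ‖p t‖⁻¹ • p t‖ ≤ 4 * (|s - t| * ‖a - b‖) := by
    rw [← h2]; linarith
  have h5 := mul_le_mul_of_nonneg_left h4 hl
  linarith

lemma sphere_bound [FiniteDimensional ℝ E] (hdim : 2 ≤ Module.finrank ℝ E)
    {f : E → E} {f' : E → E →L[ℝ] E} {X : E → E} {δ l : ℝ} (hδ : 0 < δ) (hl : 0 ≤ l)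
    (hX : ∀ a b : E, ‖a‖ = 1 → ‖b‖ = 1 → ‖X a - X b‖ ≤ l * ‖a - b‖)
    (hf : ∀ a : E, ‖a‖ = 1 → HasFDerivAt f (f' (X a)) (X a))
    (hb : ∀ a : E, ‖a‖ = 1 → ‖f' (X a)‖ ≤ δ)
    {a b : E} (ha : ‖a‖ = 1) (hb1 : ‖b‖ = 1) :
    ‖f (X b) - f (X a)‖ ≤ 16 * δ * l * ‖a - b‖ := by
  by_cases hab : 0 ≤ inner ℝ a b
  · refine (arc_bound hδ hl hX hf hb ha hb1 hab).trans ?_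
    have : 0 ≤ δ * l * ‖a - b‖ := by positivity
    linarith
  push Not at hab
  obtain ⟨w, hw0, hw⟩ : ∃ w : E, w ≠ 0 ∧ inner ℝ a w = 0 := by
    have hne : (Submodule.span ℝ {a})ᗮ ≠ ⊥ := by
      intro h
      have h1 := (Submodule.span ℝ {a}).finrank_add_finrank_orthogonal
      have h2 := finrank_span_singleton (K := ℝ) (v := a) (by rintro rfl; simp at ha)
      rw [h, finrank_bot, h2] at h1
      omega
    obtain ⟨w, hw, hw0⟩ := Submodule.exists_mem_ne_zero_of_ne_bot hne
    exact ⟨w, hw0, (Submodule.mem_orthogonal_singleton_iff_inner_right).1 hw⟩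
  obtain ⟨e, he, hae, hbe⟩ : ∃ e : E, ‖e‖ = 1 ∧ 0 ≤ inner ℝ a e ∧ 0 ≤ inner ℝ e b := by
    have hi : inner ℝ a (‖w‖⁻¹ • w) = 0 := by rw [real_inner_smul_right, hw, mul_zero]
    rcases le_total 0 (inner ℝ (‖w‖⁻¹ • w) b) with h | h
    · exact ⟨_, norm_unit hw0, hi.ge, h⟩
    · refine ⟨-(‖w‖⁻¹ • w), by rw [norm_neg, norm_unit hw0], ?_, ?_⟩
      · rw [inner_neg_right, hi, neg_zero]
      · rw [inner_neg_left]; linarith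
  have h1 := arc_bound hδ hl hX hf hb ha he hae
  have h2 := arc_bound hδ hl hX hf hb he hb1 hbe
  have h3 : ‖a - e‖ ≤ 2 := (norm_sub_le _ _).trans (by rw [ha, he]; norm_num)
  have h4 : ‖e - b‖ ≤ 2 := (norm_sub_le _ _).trans (by rw [hb1, he]; norm_num)
  have h5 : 1 ≤ ‖a - b‖ := by
    have := norm_sub_sq_real a b
    rw [ha, hb1] at this
    nlinarith [norm_nonneg (a - b)]
  have h6 : f (X b) - f (X a) = (f (X b) - f (X e)) + (f (X e) - f (X a)) := by abel
  rw [h6]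
  refine (norm_add_le _ _).trans ?_
  have h7 : 0 ≤ 4 * δ * l := by positivity
  have h8 := mul_le_mul_of_nonneg_left h3 h7
  have h9 := mul_le_mul_of_nonneg_left h4 h7
  have h10 := mul_le_mul_of_nonneg_left h5 h7
  linarith

lemma convex_of_one_dim {Ω : Set (EuclideanSpace ℝ (Fin 1))} (h : IsPreconnected Ω) :
    Convex ℝ Ω := by
  let e : EuclideanSpace ℝ (Fin 1) →L[ℝ] ℝ := EuclideanSpace.proj 0
  have hinj : Function.Injective e := by
    intro x y hxy
    ext i
    rw [Subsingleton.elim i 0]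
    exact hxy
  have h1 : Convex ℝ (e '' Ω) :=
    Real.convex_iff_isPreconnected.2 (h.image e e.continuous.continuousOn)
  have h2 := h1.linear_preimage e.toLinearMap
  have : e.toLinearMap ⁻¹' (e '' Ω) = Ω := preimage_image_eq Ω hinj
  rwa [this] at h2

/-- Openness of the image and description of its frontier. -/
lemma image_open_frontier [FiniteDimensional ℝ E] {Ω U : Set E} {φ : E → E} {δ : ℝ}
    (hΩ : IsOpen Ω) (hδ : 0 < δ) (hδ1 : δ < 1) (hU : IsOpen U) (hsub : closure Ω ⊆ U)
    (hφ : ContDiffOn ℝ 1 φ U)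
    (hbl : ∀ z ∈ closure Ω, ∀ z' ∈ closure Ω,
          (1 + δ)⁻¹ * dist z z' ≤ dist (φ z) (φ z') ∧
            dist (φ z) (φ z') ≤ (1 + δ) * dist z z')
    (hD : ∀ z ∈ closure Ω, ‖fderiv ℝ φ z - ContinuousLinearMap.id ℝ E‖ ≤ δ) :
    IsOpen (φ '' Ω) ∧ frontier (φ '' Ω) = φ '' frontier Ω := by
  have : CompleteSpace E := FiniteDimensional.complete ℝ E
  have hδ' : 0 < 1 + δ := by linarith
  have hopen : IsOpen (φ '' Ω) := by
    rw [isOpen_iff_mem_nhds]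
    rintro _ ⟨z, hz, rfl⟩
    have hzc := subset_closure hz
    have hcd : ContDiffAt ℝ 1 φ z := hφ.contDiffAt (hU.mem_nhds (hsub hzc))
    have hs : HasStrictFDerivAt φ (fderiv ℝ φ z) z := hcd.hasStrictFDerivAt one_ne_zero
    have hinj : Function.Injective (fderiv ℝ φ z).toLinearMap := by
      rw [injective_iff_map_eq_zero]
      intro v hv
      have h1 := (fderiv ℝ φ z - ContinuousLinearMap.id ℝ E).le_of_opNorm_le (hD z hzc) v
      have hv' : fderiv ℝ φ z v = 0 := hv
      rw [sub_apply, hv', ContinuousLinearMap.id_apply, zero_sub, norm_neg] at h1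
      by_contra hne
      have := norm_pos_iff.2 hne
      nlinarith
    have hsurj : Function.Surjective (fderiv ℝ φ z).toLinearMap :=
      LinearMap.injective_iff_surjective.1 hinj
    have hm := hs.map_nhds_eq_of_surj (LinearMap.range_eq_top.2 hsurj)
    rw [← hm]
    exact Filter.image_mem_map (hΩ.mem_nhds hz)
  refine ⟨hopen, ?_⟩
  have hinjOn : InjOn φ (closure Ω) := by
    intro x hx y hy hxy
    have h1 := (hbl x hx y hy).1
    rw [hxy, dist_self] at h1
    have h2 : dist x y ≤ 0 := by
      by_contra hc
      push Not at hc
      have := mul_pos (inv_pos.2 hδ') hc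
      linarith
    exact dist_le_zero.1 h2
  have hcont : ContinuousOn φ (closure Ω) := hφ.continuousOn.mono hsub
  have hclosed : IsClosed (φ '' closure Ω) := by
    have : CompleteSpace (closure Ω) := isClosed_closure.completeSpace_coe
    have ha : AntilipschitzWith ⟨1 + δ, hδ'.le⟩ (fun x : closure Ω => φ x) := by
      apply AntilipschitzWith.of_le_mul_dist
      intro x y
      have h1 := (hbl x x.2 y y.2).1
      rw [inv_mul_le_iff₀ hδ'] at h1
      exact h1
    have hl : LipschitzWith ⟨1 + δ, hδ'.le⟩ (fun x : closure Ω => φ x) := by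
      apply LipschitzWith.of_dist_le_mul
      intro x y
      exact (hbl x x.2 y y.2).2
    have := ha.isClosed_range hl.uniformContinuous
    rwa [image_eq_range]
  have hcl : closure (φ '' Ω) = φ '' closure Ω :=
    Subset.antisymm (closure_minimal (image_mono subset_closure) hclosed)
      hcont.image_closure
  rw [hopen.frontier_eq, hΩ.frontier_eq, hcl]
  exact (hinjOn.image_sdiff_subset subset_closure).symm

end LipGraph

/-- **Lemma `l:id-lip-graph`**: if `Ω` is an `L₀`-Lipschitz graph domain and `φ` is a
`(1+δ)`-bi-Lipschitz `C¹` map on a neighborhood of the closure of `Ω` whose derivative is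
`δ`-close to the identity, with `δ < δ₀(L₀,d)`, then `φ(Ω)` is an `L₁(L₀,d)`-Lipschitz graph
domain. -/
theorem image_lipschitz_graph_domain_of_near_identity (d : ℕ) (L₀ : ℝ) :
    ∃ δ₀ L₁ : ℝ, 0 < δ₀ ∧ 0 < L₁ ∧
      ∀ (Ω : Set (EuclideanSpace ℝ (Fin (d + 1)))) (φ : EuclideanSpace ℝ (Fin (d + 1)) → EuclideanSpace ℝ (Fin (d + 1))) (δ : ℝ) (U : Set (EuclideanSpace ℝ (Fin (d + 1)))),
        IsLipschitzGraphDomain d L₀ Ω →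
        0 < δ → δ < δ₀ →
        IsOpen U → closure Ω ⊆ U → ContDiffOn ℝ 1 φ U →
        (∀ z ∈ closure Ω, ∀ z' ∈ closure Ω,
          (1 + δ)⁻¹ * dist z z' ≤ dist (φ z) (φ z') ∧
            dist (φ z) (φ z') ≤ (1 + δ) * dist z z') →
        (∀ z ∈ closure Ω,
          ‖fderiv ℝ φ z - ContinuousLinearMap.id ℝ (EuclideanSpace ℝ (Fin (d + 1)))‖ ≤ δ) →
        IsLipschitzGraphDomain d L₁ (φ '' Ω) := by
  rcases lt_or_ge L₀ 0 with hneg | hL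
  · refine ⟨1, 1, one_pos, one_pos, ?_⟩
    rintro Ω φ δ U ⟨-, -, c, R, b, rf, -, -, hlip, -⟩
    exfalso
    obtain ⟨x, hx⟩ := exists_ne (0 : EuclideanSpace ℝ (Fin (d + 1)))
    have h1 : ‖x‖⁻¹ • x ∈ Metric.sphere (0 : EuclideanSpace ℝ (Fin (d + 1))) 1 :=
      mem_sphere_zero_iff_norm.2 (LipGraph.norm_unit hx)
    have h2 : -(‖x‖⁻¹ • x) ∈ Metric.sphere (0 : EuclideanSpace ℝ (Fin (d + 1))) 1 := by
      rw [mem_sphere_zero_iff_norm, norm_neg]; exact LipGraph.norm_unit hx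
    have h3 := hlip _ h1 _ h2
    have h4 : dist (‖x‖⁻¹ • x) (-(‖x‖⁻¹ • x)) = 2 := by
      rw [dist_eq_norm, sub_neg_eq_add, ← two_smul ℝ, norm_smul, LipGraph.norm_unit hx]
      norm_num
    rw [h4] at h3
    have := abs_nonneg (rf (‖x‖⁻¹ • x) - rf (-(‖x‖⁻¹ • x)))
    linarith
  have hm : 0 < 1 + L₀ := by linarith
  have hm1 : 1 ≤ (1 + L₀) ^ 4 := one_le_pow₀ (by linarith)
  refine ⟨1 / (300 * (1 + L₀) ^ 4), 5 * (1 + L₀), by positivity, by positivity, ?_⟩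
  rintro Ω φ δ U ⟨hΩo, hΩc, c, R, b, rf, hc, hfr, hlip, hbd⟩ hδ hδ0 hU hsub hφ hbl hD
  rw [lt_div_iff₀ (by positivity)] at hδ0
  have hδ1 : δ < 1 := by nlinarith
  obtain ⟨hopen, hfrφ⟩ := LipGraph.image_open_frontier hΩo hδ hδ1 hU hsub hφ hbl hD
  have hcontφ : ContinuousOn φ Ω := hφ.continuousOn.mono (subset_closure.trans hsub)
  have hA : ∀ (c : ℝ) (b : EuclideanSpace ℝ (Fin (d + 1))) (S : Set _), 0 < c →
      frontier ((fun x => c • R x + b) '' S) = (fun x => c • R x + b) '' frontier S := by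
    intro c b S hc
    let H : EuclideanSpace ℝ (Fin (d + 1)) ≃ₜ EuclideanSpace ℝ (Fin (d + 1)) :=
      (R.toHomeomorph.trans (Homeomorph.smulOfNeZero c hc.ne')).trans (Homeomorph.addRight b)
    exact (H.image_frontier S).symm
  set X : EuclideanSpace ℝ (Fin (d + 1)) → EuclideanSpace ℝ (Fin (d + 1)) :=
    fun a => R.symm (c⁻¹ • (rf a • a - b)) with hX
  have hAX : ∀ a, c • R (X a) + b = rf a • a := by
    intro a
    simp only [hX, LinearIsometryEquiv.apply_symm_apply]
    rw [smul_smul, mul_inv_cancel₀ hc.ne', one_smul, sub_add_cancel]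
  have hXA : ∀ x a, c • R x + b = rf a • a → x = X a := by
    intro x a hx
    simp only [hX]
    rw [← hx, add_sub_cancel_right, smul_smul, inv_mul_cancel₀ hc.ne', one_smul,
      LinearIsometryEquiv.symm_apply_apply]
  rw [hA c b Ω hc] at hfr
  have hfrX : frontier Ω = {x | ∃ a ∈ Metric.sphere (0 : EuclideanSpace ℝ (Fin (d + 1))) 1,
      x = X a} := by
    ext x
    constructor
    · intro hx
      have h1 : c • R x + b ∈ (fun x => c • R x + b) '' frontier Ω := ⟨x, hx, rfl⟩
      rw [hfr] at h1
      obtain ⟨a, ha, h⟩ := h1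
      exact ⟨a, ha, hXA x a h⟩
    · rintro ⟨a, ha, rfl⟩
      have h1 : rf a • a ∈ (fun x => c • R x + b) '' frontier Ω := by
        rw [hfr]; exact ⟨a, ha, rfl⟩
      obtain ⟨x, hx, h⟩ := h1
      rwa [← hXA x a h]
  have hXc : ∀ a : EuclideanSpace ℝ (Fin (d + 1)), ‖a‖ = 1 → X a ∈ closure Ω := by
    intro a ha
    apply frontier_subset_closure
    rw [hfrX]
    exact ⟨a, mem_sphere_zero_iff_norm.2 ha, rfl⟩
  set l : ℝ := c⁻¹ * (1 + L₀) with hl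
  have hl0 : 0 ≤ l := by positivity
  have hXl : ∀ p q : EuclideanSpace ℝ (Fin (d + 1)), ‖p‖ = 1 → ‖q‖ = 1 →
      ‖X p - X q‖ ≤ l * ‖p - q‖ := by
    intro p q hp hq
    have hp' := mem_sphere_zero_iff_norm.2 hp
    have hq' := mem_sphere_zero_iff_norm.2 hq
    have e : X p - X q = R.symm (c⁻¹ • (rf p • (p - q) + (rf p - rf q) • q)) := by
      simp only [hX]
      rw [← map_sub]
      congr 1
      module
    rw [e, LinearIsometryEquiv.norm_map, norm_smul, Real.norm_of_nonneg (inv_pos.2 hc).le, hl,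
      mul_assoc]
    refine mul_le_mul_of_nonneg_left ?_ (inv_pos.2 hc).le
    refine (norm_add_le _ _).trans ?_
    have h1 := hlip p hp' q hq'
    obtain ⟨h2, h3⟩ := hbd p hp'
    have h4 : 0 ≤ rf p := le_trans (by positivity) h2
    rw [norm_smul, norm_smul, hq, mul_one, Real.norm_of_nonneg h4, Real.norm_eq_abs]
    rw [dist_eq_norm] at h1
    nlinarith [norm_nonneg (p - q)]
  set f : EuclideanSpace ℝ (Fin (d + 1)) → EuclideanSpace ℝ (Fin (d + 1)) :=
    fun x => φ x - x with hf
  have hfd : ∀ z ∈ closure Ω, HasFDerivAt f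
      (fderiv ℝ φ z - ContinuousLinearMap.id ℝ (EuclideanSpace ℝ (Fin (d + 1)))) z := by
    intro z hz
    have h1 : DifferentiableAt ℝ φ z :=
      (hφ.contDiffAt (hU.mem_nhds (hsub hz))).differentiableAt one_ne_zero
    exact h1.hasFDerivAt.sub (hasFDerivAt_id z)
  have hfl : ∀ p q : EuclideanSpace ℝ (Fin (d + 1)), ‖p‖ = 1 → ‖q‖ = 1 →
      ‖f (X q) - f (X p)‖ ≤ 16 * δ * l * ‖p - q‖ := by
    intro p q hp hq
    rcases Nat.eq_zero_or_pos d with h0 | hpos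
    · subst h0
      have hconv : Convex ℝ (closure Ω) := (LipGraph.convex_of_one_dim hΩc.isPreconnected).closure
      have h1 := hconv.norm_image_sub_le_of_norm_hasFDerivWithin_le
        (fun z hz => (hfd z hz).hasFDerivWithinAt) hD (hXc p hp) (hXc q hq)
      have h2 := hXl p q hp hq
      rw [norm_sub_rev] at h2
      have h3 := mul_le_mul_of_nonneg_left h2 hδ.le
      have h4 : 0 ≤ δ * (l * ‖p - q‖) := by positivity
      linarith
    · refine LipGraph.sphere_bound (by rw [finrank_euclideanSpace_fin]; omega)
        (f' := fun z => fderiv ℝ φ z - ContinuousLinearMap.id ℝ _) hδ hl0 hXl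
        (fun a ha => hfd _ (hXc a ha)) (fun a ha => hD _ (hXc a ha)) hp hq
  obtain ⟨θ₀, hθ₀⟩ : ∃ a : EuclideanSpace ℝ (Fin (d + 1)), ‖a‖ = 1 := by
    obtain ⟨x, hx⟩ := exists_ne (0 : EuclideanSpace ℝ (Fin (d + 1)))
    exact ⟨_, LipGraph.norm_unit hx⟩
  set h : EuclideanSpace ℝ (Fin (d + 1)) → EuclideanSpace ℝ (Fin (d + 1)) :=
    fun a => c • R (f (X a) - f (X θ₀)) with hh
  set ε : ℝ := 16 * δ * (1 + L₀) with hε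
  have hhl : ∀ p q : EuclideanSpace ℝ (Fin (d + 1)), ‖p‖ = 1 → ‖q‖ = 1 →
      ‖h p - h q‖ ≤ ε * ‖p - q‖ := by
    intro p q hp hq
    have e : h p - h q = c • R (f (X p) - f (X q)) := by
      simp only [hh, map_sub]
      module
    rw [e, norm_smul, LinearIsometryEquiv.norm_map, Real.norm_of_nonneg hc.le, norm_sub_rev p q]
    have h1 := mul_le_mul_of_nonneg_left (hfl q p hq hp) hc.le
    have e2 : c * (16 * δ * l * ‖q - p‖) = ε * ‖q - p‖ := by
      rw [hl, hε]; field_simp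
    rwa [e2] at h1
  have hε0 : 0 ≤ ε := by positivity
  obtain ⟨r', hset, hr'l, hr'b⟩ := LipGraph.graph_core (r := rf) (h := h) hL hε0
    (by rw [hε]; nlinarith) hlip hbd
    (fun p hp q hq => hhl p q (mem_sphere_zero_iff_norm.1 hp) (mem_sphere_zero_iff_norm.1 hq))
    (fun p hp => by
      have hp' := mem_sphere_zero_iff_norm.1 hp
      have h1 := hhl p θ₀ hp' hθ₀
      have h2 : h θ₀ = 0 := by simp [hh]
      have h3 : ‖p - θ₀‖ ≤ 2 := (norm_sub_le _ _).trans (by rw [hp', hθ₀]; norm_num)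
      rw [h2, sub_zero] at h1
      nlinarith)
  refine ⟨hopen, hΩc.image φ hcontφ, c / 2, R, (1 / 2 : ℝ) • (b - c • R (f (X θ₀))), r',
    by positivity, ?_, hr'l, hr'b⟩
  rw [hA _ _ _ (by positivity), hfrφ, ← hset, hfrX]
  have key : ∀ a, (c / 2) • R (φ (X a)) + (1 / 2 : ℝ) • (b - c • R (f (X θ₀))) =
      (1 / 2 : ℝ) • (rf a • a + h a) := by
    intro a
    rw [← hAX a]
    have : φ (X a) = f (X a) + X a := by simp [hf]
    rw [this]
    simp only [hh, map_sub, map_add]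
    module
  ext y
  constructor
  · rintro ⟨_, ⟨_, ⟨a, ha, rfl⟩, rfl⟩, rfl⟩
    exact ⟨a, ha, key a⟩
  · rintro ⟨a, ha, rfl⟩
    exact ⟨_, ⟨_, ⟨a, ha, rfl⟩, rfl⟩, key a⟩

end
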